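/- arXiv:1709.00797 — 6 statements merged into one kernel-verified Lean document; each statement's English description precedes it below -/
import Mathlib

section
/- Let Ψ ⊆ ℝ^m, let y* ∈ Ψ be efficient in Ψ, and let y¹,…,y^L ∈ Ψ and coefficients u_1,…,u_L ≥ 0 with Σ_{i=1}^L u_i = 1 be such that the convex combination y^c = Σ_{i=1}^L u_i y^i dominates y*. Then for every w ∈ ℝ^m with w_i > 0 for all i and Σ_{i=1}^m w_i = 1, there exists y ∈ Ψ with w·y < w·y*; in particular y* is not an optimal objective vector of the weighted problem for any strictly positive weight vector. -/
/-!
The weighted value `w · y` is linear in `y`, so its value at a convex combination is the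
average of its values at the points `ys i`. Since `w` is strictly positive, dominance makes
the value at the combination strictly smaller than `w · ystar`; hence some `ys i ∈ Ψ` has a
value below `w · ystar`.
-/

/-- Theorem 3.2 (Nonsufficiency of the weighted method): if an efficient vector
`y*` of `Ψ` is dominated by a convex combination of vectors of `Ψ`, then for every
strictly positive weight vector `w` summing to one there is some `y ∈ Ψ` with
`w · y < w · y*`. -/
theorem weighted_method_nonsufficiency
    (m L : ℕ) (Ψ : Set (Fin m → ℝ))
    (ystar : Fin m → ℝ) (hyΨ : ystar ∈ Ψ)
    (heff : ¬ ∃ y ∈ Ψ, (∀ i, y i ≤ ystar i) ∧ (∃ i, y i < ystar i))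
    (ys : Fin L → (Fin m → ℝ)) (hys : ∀ i, ys i ∈ Ψ)
    (u : Fin L → ℝ) (hu : ∀ i, 0 ≤ u i) (husum : ∑ i, u i = 1)
    (hdom₁ : ∀ j, (∑ i, u i * ys i j) ≤ ystar j)
    (hdom₂ : ∃ j, (∑ i, u i * ys i j) < ystar j) :
    ∀ w : Fin m → ℝ, (∀ i, 0 < w i) → (∑ i, w i = 1) →
      ∃ y ∈ Ψ, ∑ i, w i * y i < ∑ i, w i * ystar i := by
  intro w hw _
  by_contra! hopt
  obtain ⟨j₀, hj₀⟩ := hdom₂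
  -- Positive weights turn dominance into a strict inequality of weighted values.
  have hlt : ∑ j, w j * ∑ i, u i * ys i j < ∑ j, w j * ystar j :=
    Finset.sum_lt_sum (fun j _ => mul_le_mul_of_nonneg_left (hdom₁ j) (hw j).le)
      ⟨j₀, Finset.mem_univ _, mul_lt_mul_of_pos_left hj₀ (hw j₀)⟩
  have hswap : ∑ j, w j * ∑ i, u i * ys i j = ∑ i, u i * ∑ j, w j * ys i j := by
    simp only [Finset.mul_sum]
    rw [Finset.sum_comm]
    exact Finset.sum_congr rfl fun i _ => Finset.sum_congr rfl fun j _ => by ring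
  -- An average of values, each at least `w · ystar`, is at least `w · ystar`.
  have hge : ∑ j, w j * ystar j ≤ ∑ i, u i * ∑ j, w j * ys i j := by
    calc ∑ j, w j * ystar j = ∑ i, u i * ∑ j, w j * ystar j := by
          rw [← Finset.sum_mul, husum, one_mul]
      _ ≤ ∑ i, u i * ∑ j, w j * ys i j :=
          Finset.sum_le_sum fun i _ =>
            mul_le_mul_of_nonneg_left (hopt (ys i) (hys i)) (hu i)
  linarith
end

section
/- Let S ⊆ ℝ^m (m ≥ 1) be a nonempty set satisfying: (Property 1) there is no y ∈ S with y_i < 0 for all i ∈ {1,…,m}; and (Property 2) for every finite family y¹,…,yᵏ ∈ S and coefficients α_1,…,α_k ≥ 0 with Σ_{i=1}^k α_i = 1, there exists y ∈ S with y_j ≤ Σ_{i=1}^k α_i yⁱ_j for all j. Then there exists p ∈ ℝ^m with p_i ≥ 0 for all i, p ≠ 0, and p·y ≥ 0 for every y ∈ S. -/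
/-!
The second property says exactly that the upper closure `C = {z | ∃ y ∈ S, y ≤ z}` is convex, and the
first that `C` misses the open negative orthant. Hahn–Banach gives a functional `f` and a level `u`
with `f < u` on the orthant and `u ≤ f` on `C`. Since the orthant is a cone, `0 ≤ u`; since `C` is
closed under adding nonnegative vectors, the coefficients `p i = f (e i)` are nonnegative; and `f`
is nonzero because the separation is strict on one side and both sets are nonempty.
-/

/-- Theorem 3.7 (set adaptation of the generalized Gordan theorem): if a nonempty
`S ⊆ ℝ^m` (with `m ≥ 1`) contains no componentwise strictly negative vector and
every convex combination of vectors of `S` is bounded below (componentwise) by a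
vector of `S`, then there is a nonzero componentwise-nonnegative `p` with
`p · y ≥ 0` for every `y ∈ S`. -/
theorem set_generalized_gordan
    (m : ℕ) (hm : 1 ≤ m) (S : Set (Fin m → ℝ)) (hS : S.Nonempty)
    (h1 : ¬ ∃ y ∈ S, ∀ i, y i < 0)
    (h2 : ∀ (k : ℕ) (ys : Fin k → (Fin m → ℝ)), (∀ i, ys i ∈ S) →
      ∀ α : Fin k → ℝ, (∀ i, 0 ≤ α i) → (∑ i, α i = 1) →
      ∃ y ∈ S, ∀ j, y j ≤ ∑ i, α i * ys i j) :
    ∃ p : Fin m → ℝ, (∀ i, 0 ≤ p i) ∧ p ≠ 0 ∧ ∀ y ∈ S, 0 ≤ ∑ i, p i * y i := by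
  have hNc : Convex ℝ (Set.univ.pi fun _ : Fin m => Set.Iio (0 : ℝ)) :=
    convex_pi fun _ _ => convex_Iio 0
  have hNo : IsOpen (Set.univ.pi fun _ : Fin m => Set.Iio (0 : ℝ)) :=
    isOpen_set_pi Set.finite_univ fun _ _ => isOpen_Iio
  have hC : Convex ℝ {z : Fin m → ℝ | ∃ y ∈ S, y ≤ z} := by
    rintro z ⟨y, hy, hyz⟩ z' ⟨y', hy', hyz'⟩ a b ha hb hab
    obtain ⟨w, hw, hwle⟩ := h2 2 ![y, y']
      (by intro i; fin_cases i <;> simpa) ![a, b]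
      (by intro i; fin_cases i <;> simpa) (by simpa [Fin.sum_univ_two] using hab)
    refine ⟨w, hw, fun j => (hwle j).trans ?_⟩
    simp only [Fin.sum_univ_two, Matrix.cons_val_zero, Matrix.cons_val_one, Pi.add_apply,
      Pi.smul_apply, smul_eq_mul]
    exact add_le_add (mul_le_mul_of_nonneg_left (hyz j) ha)
      (mul_le_mul_of_nonneg_left (hyz' j) hb)
  have hdisj : Disjoint (Set.univ.pi fun _ : Fin m => Set.Iio (0 : ℝ))
      {z : Fin m → ℝ | ∃ y ∈ S, y ≤ z} := by
    rw [Set.disjoint_left]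
    rintro z hz ⟨y, hy, hyz⟩
    exact h1 ⟨y, hy, fun i => (hyz i).trans_lt (hz i (Set.mem_univ i))⟩
  obtain ⟨f, u, hfN, hfC⟩ := geometric_hahn_banach_open hNc hNo hC hdisj
  have hsum : ∀ y : Fin m → ℝ, f y = ∑ i, f (Pi.single i 1) * y i := by
    intro y
    conv_lhs => rw [pi_eq_sum_univ' y]
    simp [map_sum, mul_comm, Pi.single]
  obtain ⟨y₀, hy₀⟩ := hS
  have hneg : ∀ t : ℝ, 0 < t → t * f (-1) < u := by
    intro t ht
    have := hfN (t • (-1)) (fun i _ => by simpa using ht)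
    simpa using this
  have hu : 0 ≤ u := by
    by_contra! hu
    have hc : f (-1) < 0 := by linarith [hneg 1 one_pos]
    -- Scaling `-1` by `u / f (-1) > 0` gives a point of the orthant where `f` equals `u`.
    have := hneg (u / f (-1)) (div_pos_of_neg_of_neg hu hc)
    rw [div_mul_cancel₀ _ hc.ne] at this
    exact lt_irrefl _ this
  refine ⟨fun i => f (Pi.single i 1), fun i => ?_, fun hp => ?_, fun y hy => ?_⟩
  · by_contra! hi
    have key : ∀ t : ℝ, 0 ≤ t → u ≤ f y₀ + t * f (Pi.single i 1) := by
      intro t ht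
      have := hfC (y₀ + t • Pi.single i 1)
        ⟨y₀, hy₀, le_add_of_nonneg_right
          (smul_nonneg ht (Pi.single_nonneg.2 zero_le_one))⟩
      simpa using this
    have h0 := key 0 le_rfl
    -- At this `t` the right-hand side of `key` equals `u - 1`.
    have := key ((u - f y₀ - 1) / f (Pi.single i 1))
      (div_nonneg_of_nonpos (by linarith) hi.le)
    rw [div_mul_cancel₀ _ hi.ne] at this
    linarith
  · have hz : ∀ y, f y = 0 := fun y => by
      rw [hsum]
      exact Finset.sum_eq_zero fun i _ => by rw [congrFun hp i]; simp
    have h3 := hneg 1 one_pos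
    have h4 := hfC y₀ ⟨y₀, hy₀, le_rfl⟩
    rw [hz] at h3 h4
    linarith
  · rw [← hsum]
    exact hu.trans (hfC y ⟨y, hy, le_rfl⟩)
end

section
/- Let y¹, y², w¹, w² ∈ ℝ² with w¹_i > 0 and w²_i > 0 for i = 1,2, w¹_1 + w¹_2 = w²_1 + w²_2 = 1, and w¹ ≠ w². Assume the strict optimality relations w¹·y¹ < w¹·y² and w²·y² < w²·y¹. Then any w ∈ ℝ² satisfying w·y¹ = w·y² and w_1 + w_2 = 1 can be written as w = α w¹ + β w² with α > 0, β > 0, and α + β = 1. -/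
/-!
On the line of vectors with unit component sum, `v ↦ v · (y2 - y1)` is an affine function of `v 0`.
It takes a value `p > 0` at `w1` and a value `-q < 0` at `w2`, so it is not constant and has a
unique zero, namely `(q / (p + q)) w1 + (p / (p + q)) w2`. Since it vanishes at `w`, this is `w`.
-/

/-- Theorem 4.1 (recursivity of the weighted problem for two dimensions): any
weight vector `w` with unit component sum whose hyperplane contains both `y¹` and
`y²` is a strict convex combination of the parent weight vectors `w¹` and `w²`. -/
theorem weighted_problem_recursivity_2D
    (y1 y2 w1 w2 : Fin 2 → ℝ)
    (hw1 : ∀ i, 0 < w1 i) (hw2 : ∀ i, 0 < w2 i)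
    (hs1 : w1 0 + w1 1 = 1) (hs2 : w2 0 + w2 1 = 1) (hne : w1 ≠ w2)
    (hopt1 : ∑ i, w1 i * y1 i < ∑ i, w1 i * y2 i)
    (hopt2 : ∑ i, w2 i * y2 i < ∑ i, w2 i * y1 i)
    (w : Fin 2 → ℝ)
    (hweq : ∑ i, w i * y1 i = ∑ i, w i * y2 i)
    (hwsum : w 0 + w 1 = 1) :
    ∃ α β : ℝ, 0 < α ∧ 0 < β ∧ α + β = 1 ∧ w = α • w1 + β • w2 := by
  simp only [Fin.sum_univ_two] at hopt1 hopt2 hweq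
  have e1 : w1 1 = 1 - w1 0 := by linarith
  have e2 : w2 1 = 1 - w2 0 := by linarith
  have e : w 1 = 1 - w 0 := by linarith
  rw [e1] at hopt1
  rw [e2] at hopt2
  rw [e] at hweq
  -- `p` and `-q` are the values of `v ↦ v · (y2 - y1)` at `w1` and `w2`.
  obtain ⟨p, hp⟩ : ∃ p, p = w1 0 * (y2 0 - y1 0) + (1 - w1 0) * (y2 1 - y1 1) := ⟨_, rfl⟩
  obtain ⟨q, hq⟩ : ∃ q, q = -(w2 0 * (y2 0 - y1 0) + (1 - w2 0) * (y2 1 - y1 1)) := ⟨_, rfl⟩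
  have p_pos : 0 < p := by rw [hp]; linarith
  have q_pos : 0 < q := by rw [hq]; linarith
  have hpq : p + q ≠ 0 := by positivity
  have key : w 0 * (p + q) = q * w1 0 + p * w2 0 := by
    rw [hp, hq]
    linear_combination (w2 0 - w1 0) * hweq
  have h0 : w 0 = q / (p + q) * w1 0 + p / (p + q) * w2 0 := by
    field_simp
    linear_combination key
  have hsum : q / (p + q) + p / (p + q) = 1 := by
    field_simp
    ring
  refine ⟨q / (p + q), p / (p + q), by positivity, by positivity, hsum, ?_⟩
  ext i
  fin_cases i
  · simpa using h0
  · simp only [Fin.mk_one, Pi.add_apply, Pi.smul_apply, smul_eq_mul, e, e1, e2]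
    linear_combination -h0 - hsum
end

section
/- Let y¹, y², w¹, w² ∈ ℝ² with w¹_i > 0 and w²_i > 0 for i = 1,2 and w¹_1 + w¹_2 = w²_1 + w²_2 = 1. Assume the optimality relations w¹·y¹ ≤ w¹·y² and w²·y² ≤ w²·y¹. If w¹_1 > w²_1, then y¹_1 ≤ y²_1 and y¹_2 ≥ y²_2. -/
/-- Theorem 4.2 (sensitivity of the weighted method for two dimensions): if
`w¹_1 > w²_1` then the corresponding optimal objective vectors satisfy
`y¹_1 ≤ y²_1` and `y¹_2 ≥ y²_2`. -/
theorem weighted_method_sensitivity_2D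
    (y1 y2 w1 w2 : Fin 2 → ℝ)
    (hw1 : ∀ i, 0 < w1 i) (hw2 : ∀ i, 0 < w2 i)
    (hs1 : w1 0 + w1 1 = 1) (hs2 : w2 0 + w2 1 = 1)
    (hopt1 : ∑ i, w1 i * y1 i ≤ ∑ i, w1 i * y2 i)
    (hopt2 : ∑ i, w2 i * y2 i ≤ ∑ i, w2 i * y1 i)
    (hgt : w2 0 < w1 0) :
    y1 0 ≤ y2 0 ∧ y2 1 ≤ y1 1 := by
  rw [Fin.sum_univ_two, Fin.sum_univ_two] at hopt1 hopt2
  have e1 : w1 1 = 1 - w1 0 := by linarith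
  have e2 : w2 1 = 1 - w2 0 := by linarith
  -- Eliminating one coordinate of `y1 - y2` from the two optimality inequalities leaves the other
  -- multiplied by the determinant `w1 0 * w2 1 - w2 0 * w1 1`, which equals `w1 0 - w2 0 > 0`.
  constructor
  · have h1 := mul_le_mul_of_nonneg_left hopt1 (hw2 1).le
    have h2 := mul_le_mul_of_nonneg_left hopt2 (hw1 1).le
    rw [e1, e2] at h1 h2
    refine le_of_mul_le_mul_left ?_ (sub_pos.mpr hgt)
    linarith
  · have h1 := mul_le_mul_of_nonneg_left hopt1 (hw2 0).le
    have h2 := mul_le_mul_of_nonneg_left hopt2 (hw1 0).le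
    rw [e1] at h1
    rw [e2] at h2
    refine le_of_mul_le_mul_left ?_ (sub_pos.mpr hgt)
    linarith
end

section
/- Let Ψ ⊆ ℝ² and let y¹, y², y³ ∈ Ψ be obtained with weight vectors w¹, w², w³ ∈ ℝ² under strict optimality: wⁱ·yⁱ < wⁱ·y for every y ∈ Ψ with y ≠ yⁱ (i = 1,2,3). Suppose w³ = α w¹ + (1−α) w² with 0 < α < 1, and that y³ ≠ y¹ and y³ ≠ y². If p ∈ ℝ² satisfies w¹·p = w¹·y¹ and w²·p = w²·y², then w³·p < w³·y³; in particular no p can satisfy all three equations w¹·p = w¹·y¹, w²·p = w²·y², and w³·p = w³·y³ simultaneously. -/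
/-- Lemma 5.3: if `p` is the intersection point of the supporting hyperplanes of
`y¹` and `y²`, and `w³` is a strict convex combination of `w¹` and `w²` with
unique optimum `y³` distinct from `y¹` and `y²`, then `w³ · p < w³ · y³`; in
particular `p` cannot satisfy the third hyperplane equation. -/
theorem nise_intersection_lemma
    (Ψ : Set (Fin 2 → ℝ)) (y1 y2 y3 : Fin 2 → ℝ)
    (hy1 : y1 ∈ Ψ) (hy2 : y2 ∈ Ψ) (hy3 : y3 ∈ Ψ)
    (w1 w2 w3 : Fin 2 → ℝ)
    (hopt1 : ∀ y ∈ Ψ, y ≠ y1 → ∑ i, w1 i * y1 i < ∑ i, w1 i * y i)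
    (hopt2 : ∀ y ∈ Ψ, y ≠ y2 → ∑ i, w2 i * y2 i < ∑ i, w2 i * y i)
    (hopt3 : ∀ y ∈ Ψ, y ≠ y3 → ∑ i, w3 i * y3 i < ∑ i, w3 i * y i)
    (α : ℝ) (hα0 : 0 < α) (hα1 : α < 1)
    (hw3 : w3 = α • w1 + (1 - α) • w2)
    (hne1 : y3 ≠ y1) (hne2 : y3 ≠ y2)
    (p : Fin 2 → ℝ)
    (hp1 : ∑ i, w1 i * p i = ∑ i, w1 i * y1 i)
    (hp2 : ∑ i, w2 i * p i = ∑ i, w2 i * y2 i) :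
    (∑ i, w3 i * p i < ∑ i, w3 i * y3 i) ∧
      ∑ i, w3 i * p i ≠ ∑ i, w3 i * y3 i := by
  have h1 := hopt1 y3 hy3 hne1
  have h2 := hopt2 y3 hy3 hne2
  rw [← hp1] at h1
  rw [← hp2] at h2
  -- `w ↦ w · q` is linear, so the strict inequalities for `w1` and `w2` combine convexly.
  have hlin : ∀ q : Fin 2 → ℝ,
      ∑ i, w3 i * q i = α * ∑ i, w1 i * q i + (1 - α) * ∑ i, w2 i * q i := by
    intro q
    simp only [hw3, Fin.sum_univ_two, Pi.add_apply, Pi.smul_apply, smul_eq_mul]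
    ring
  have hlt : ∑ i, w3 i * p i < ∑ i, w3 i * y3 i := by
    rw [hlin p, hlin y3]
    exact add_lt_add (mul_lt_mul_of_pos_left h1 hα0)
      (mul_lt_mul_of_pos_left h2 (sub_pos.mpr hα1))
  exact ⟨hlt, hlt.ne⟩
end

section
/- Let w, r̲, ν ∈ ℝ^m, v, ξ ∈ ℝ, μ ∈ ℝ^L, and r¹,…,r^L ∈ ℝ^m satisfy the KKT-type conditions: (i) r̲ − Σ_{i=1}^L μ_i rⁱ − ν + ξ·1 = 0 (where 1 is the all-ones vector), (ii) Σ_{i=1}^L μ_i = 1, (iii) μ_i (v − w·rⁱ) = 0 for all i ∈ {1,…,L}, (iv) ν_j w_j = 0 for all j ∈ {1,…,m}, and (v) Σ_{j=1}^m w_j = 1. Then w·r̲ − v = −ξ. -/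
/-!
Taking the inner product of the stationarity condition with `w` gives
`w·r̲ = ∑ i, μ i * (w·rⁱ) + w·ν - ξ * ∑ j, w j`. Complementarity makes `w·ν` vanish and turns each
`μ i * (w·rⁱ)` into `μ i * v`; since `μ` and `w` both sum to one, this is `w·r̲ = v - ξ`.
-/

/-- Equation (34): at KKT points of the MONISE subproblem (after the substitution
`v = w·r̄`), the objective satisfies `w·r̲ − v = −ξ`. -/
theorem monise_kkt_objective
    (m L : ℕ) (w runder ν : Fin m → ℝ) (v ξ : ℝ)
    (μ : Fin L → ℝ) (r : Fin L → (Fin m → ℝ))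
    (h1 : ∀ j, runder j - (∑ i, μ i * r i j) - ν j + ξ = 0)
    (h2 : ∑ i, μ i = 1)
    (h3 : ∀ i, μ i * (v - ∑ j, w j * r i j) = 0)
    (h4 : ∀ j, ν j * w j = 0)
    (h5 : ∑ j, w j = 1) :
    ∑ j, w j * runder j - v = -ξ := by
  -- Pair stationarity with `w`; complementarity of `ν` removes the `ν`-term.
  have hw : ∑ j, w j * runder j = ∑ j, (∑ i, w j * (μ i * r i j) - ξ * w j) := by
    refine Finset.sum_congr rfl fun j _ => ?_
    rw [← Finset.mul_sum]
    linear_combination w j * h1 j + h4 j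
  -- Complementarity of `μ`, summed over `i`, identifies the remaining double sum with `v`.
  have hv : ∑ j, ∑ i, w j * (μ i * r i j) = v := by
    rw [Finset.sum_comm]
    calc ∑ i, ∑ j, w j * (μ i * r i j) = ∑ i, μ i * v := by
          refine Finset.sum_congr rfl fun i _ => ?_
          have e : ∑ j, w j * (μ i * r i j) = μ i * ∑ j, w j * r i j := by
            rw [Finset.mul_sum]
            exact Finset.sum_congr rfl fun j _ => by ring
          rw [e]
          linear_combination -h3 i
      _ = v := by rw [← Finset.sum_mul, h2, one_mul]
  rw [hw, Finset.sum_sub_distrib, hv, ← Finset.mul_sum, h5]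
  ring
end
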